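/- arXiv:2409.16963 — 2 statements merged into one kernel-verified Lean document; each statement's English description precedes it below -/
import Mathlib

section
/- Let β(x) = (1+x)^{-1} (the t-SNE case). For every solution Y(t) of the gradient flow of the relative entropy there exists a constant C > 0 (depending on n, s, the initial configuration Y(0) and the probabilities p_{ij}, but not on t) such that diam Y(t) ≤ C t^{1/4} for all t ≥ 1. -/
open Filter Topology

/-- The normalizing constant `Z = Σ_{k ≠ ℓ} β(|y_k - y_ℓ|²)`. -/
noncomputable def pairZ {E : Type*} [NormedAddCommGroup E] (β : ℝ → ℝ) {n : ℕ}
    (Y : Fin n → E) : ℝ :=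
  ∑ k : Fin n, ∑ l : Fin n, if k ≠ l then β (‖Y k - Y l‖ ^ 2) else 0

/-- The low-dimensional similarity `q_{ij}(Y) = β(|y_i - y_j|²) / Z(Y)`. -/
noncomputable def qfun {E : Type*} [NormedAddCommGroup E] (β : ℝ → ℝ) {n : ℕ}
    (Y : Fin n → E) (i j : Fin n) : ℝ :=
  β (‖Y i - Y j‖ ^ 2) / pairZ β Y

/-- The derivative `(log β)'` on `[0, ∞)`. -/
noncomputable def lbd (β : ℝ → ℝ) : ℝ → ℝ :=
  fun x => derivWithin (fun y => Real.log (β y)) (Set.Ici 0) x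

/-- `Y : ℝ → Fin n → E` is a solution of the gradient flow of the relative entropy:
`dy_i/dt = 4 Σ_{j ≠ i} (p_{ij} - q_{ij}(Y)) (y_i - y_j) (log β)'(|y_i - y_j|²)` for `t ≥ 0`. -/
def IsGradFlow {E : Type*} [NormedAddCommGroup E] [NormedSpace ℝ E] (β : ℝ → ℝ) {n : ℕ}
    (p : Fin n → Fin n → ℝ) (Y : ℝ → Fin n → E) : Prop :=
  ∀ i : Fin n, ∀ t ∈ Set.Ici (0 : ℝ),
    HasDerivWithinAt (fun u => Y u i)
      (∑ j ∈ Finset.univ.filter (· ≠ i),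
        (4 * (p i j - qfun β (Y t) i j) * lbd β (‖Y t i - Y t j‖ ^ 2)) • (Y t i - Y t j))
      (Set.Ici 0) t

/-- The diameter of the configuration `Y`, i.e. `max_{i,j} |y_i - y_j|`. -/
noncomputable def diamY {E : Type*} [NormedAddCommGroup E] {n : ℕ} (Y : Fin n → E) : ℝ :=
  Metric.diam (Set.range Y)

/-!
Write `Z = ∑_{k ≠ l} β(|y_k - y_l|²)` and `dy_i/dt = v_i`. The cross entropy
`F = -∑ p_{ij} log q_{ij}` satisfies `dF/dt = -∑ |v_i|²`, so it stays below its initial value. Since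
every `q_{ij}` is at most `1`, each summand of `F` is nonnegative, whence
`q_{ij} ≥ exp (-F / p_{ij})`. For `β(x) = (1 + x)⁻¹` one has `1 / q_{ij} = (1 + |y_i - y_j|²) Z`,
which is therefore bounded along the flow, and hence so is `S Z`, where `S = ∑ |y_i - y_j|²`. On the
other hand, `dS/dt = 8n ∑ (p_{ij} - q_{ij}) (1 + |y_i - y_j|²)⁻¹ ≤ 8n Z`. Thus `S²` has bounded
derivative, and it dominates the fourth power of the diameter.
-/

section FiniteSums

open Finset RealInnerProductSpace

variable {ι : Type*} [Fintype ι]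

theorem sum_univ_offDiag_eq_sum_sum_ite [DecidableEq ι] {M : Type*} [AddCommMonoid M]
    (f : ι → ι → M) : ∑ a ∈ univ.offDiag, f a.1 a.2 = ∑ i, ∑ j, if i ≠ j then f i j else 0 := by
  rw [← sum_product' (f := fun i j ↦ if i ≠ j then f i j else 0), ← sum_filter]
  congr 1
  ext a
  simp

theorem sum_univ_offDiag_eq_sum_sum {M : Type*} [AddCommMonoid M]
    {f : ι → ι → M} (hf : ∀ i, f i i = 0) :
    ∑ a ∈ univ.offDiag, f a.1 a.2 = ∑ i, ∑ j, f i j := by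
  classical
  rw [sum_univ_offDiag_eq_sum_sum_ite]
  refine sum_congr rfl fun i _ ↦ sum_congr rfl fun j _ ↦ ?_
  split_ifs with hij
  · rfl
  · rw [← not_not.1 hij, hf]

theorem sum_sum_smul_sub_eq_zero {R M : Type*} [Ring R] [AddCommGroup M] [Module R M]
    {A : ι → ι → R} (hA : ∀ i j, A i j = A j i) (y : ι → M) :
    ∑ i, ∑ j, A i j • (y i - y j) = 0 := by
  simp only [smul_sub, sum_sub_distrib]
  rw [sub_eq_zero, sum_comm]
  exact sum_congr rfl fun i _ ↦ sum_congr rfl fun j _ ↦ by rw [hA]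

variable {E : Type*} [SeminormedAddCommGroup E] [InnerProductSpace ℝ E]

theorem sum_sum_mul_inner_sub_sub {A : ι → ι → ℝ} (hA : ∀ i j, A i j = A j i) (y v : ι → E) :
    ∑ i, ∑ j, A i j * ⟪y i - y j, v i - v j⟫ = 2 * ∑ i, ⟪∑ j, A i j • (y i - y j), v i⟫ := by
  have hsplit (i j : ι) : A i j * ⟪y i - y j, v i - v j⟫
      = A i j * ⟪y i - y j, v i⟫ + A i j * ⟪y j - y i, v j⟫ := by
    simp only [inner_sub_left, inner_sub_right]
    ring
  have hswap : ∑ i, ∑ j, A i j * ⟪y j - y i, v j⟫ = ∑ i, ∑ j, A i j * ⟪y i - y j, v i⟫ := by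
    rw [sum_comm]
    exact sum_congr rfl fun i _ ↦ sum_congr rfl fun j _ ↦ by rw [hA]
  simp only [hsplit, sum_add_distrib, hswap, sum_inner, real_inner_smul_left]
  ring

theorem sum_sum_inner_sub_sub_of_sum_eq_zero (y : ι → E) {v : ι → E} (hv : ∑ i, v i = 0) :
    ∑ i, ∑ j, ⟪y i - y j, v i - v j⟫ = 2 * Fintype.card ι * ∑ i, ⟪y i, v i⟫ := by
  have hcenter : ∑ i, ⟪∑ j, (y i - y j), v i⟫ = Fintype.card ι * ∑ i, ⟪y i, v i⟫ := by
    simp only [sum_sub_distrib, sum_const, card_univ, inner_sub_left, ← Nat.cast_smul_eq_nsmul ℝ,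
      real_inner_smul_left, ← inner_sum, hv, inner_zero_right, sub_zero, mul_sum]
  have h := sum_sum_mul_inner_sub_sub (A := fun _ _ : ι ↦ (1 : ℝ)) (fun _ _ ↦ rfl) y v
  simp only [one_mul, one_smul, hcenter] at h
  rw [h, mul_assoc]

end FiniteSums

theorem le_add_mul_sub_of_hasDerivWithinAt_le {f f' : ℝ → ℝ} {a C : ℝ}
    (hf : ∀ t ∈ Set.Ici a, HasDerivWithinAt f (f' t) (Set.Ici a) t)
    (hC : ∀ t ∈ Set.Ici a, f' t ≤ C) {t : ℝ} (ht : a ≤ t) : f t ≤ f a + C * (t - a) := by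
  have hB (x : ℝ) : HasDerivAt (fun u ↦ f a + C * (u - a)) C x := by
    simpa using (((hasDerivAt_id x).sub_const a).const_mul C).const_add (f a)
  exact image_le_of_deriv_right_le_deriv_boundary
    (fun x hx ↦ (hf x hx.1).continuousWithinAt.mono Set.Icc_subset_Ici_self)
    (fun x hx ↦ (hf x hx.1).mono (Set.Ici_subset_Ici.2 hx.1)) (by simp)
    (fun x _ ↦ (hB x).continuousAt.continuousWithinAt) (fun x _ ↦ (hB x).hasDerivWithinAt)
    (fun x hx ↦ hC x hx.1) (Set.right_mem_Icc.2 ht)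

section Similarity

open Finset

variable {E : Type*} [NormedAddCommGroup E] {n : ℕ} {β : ℝ → ℝ}

theorem pairZ_eq_sum_offDiag (β : ℝ → ℝ) (Y : Fin n → E) :
    pairZ β Y = ∑ a ∈ univ.offDiag, β (‖Y a.1 - Y a.2‖ ^ 2) :=
  (sum_univ_offDiag_eq_sum_sum_ite fun i j ↦ β (‖Y i - Y j‖ ^ 2)).symm

theorem pairZ_pos [Nontrivial (Fin n)] (hβ : ∀ x, 0 ≤ x → 0 < β x) (Y : Fin n → E) :
    0 < pairZ β Y := by
  obtain ⟨i, j, hij⟩ := exists_pair_ne (Fin n)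
  rw [pairZ_eq_sum_offDiag]
  exact sum_pos (fun a _ ↦ hβ _ (sq_nonneg _)) ⟨(i, j), by simpa using hij⟩

theorem qfun_comm (β : ℝ → ℝ) (Y : Fin n → E) (i j : Fin n) : qfun β Y i j = qfun β Y j i := by
  rw [qfun, qfun, norm_sub_rev]

theorem qfun_pos [Nontrivial (Fin n)] (hβ : ∀ x, 0 ≤ x → 0 < β x) (Y : Fin n → E)
    (i j : Fin n) : 0 < qfun β Y i j :=
  div_pos (hβ _ (sq_nonneg _)) (pairZ_pos hβ Y)

theorem sum_offDiag_qfun {Y : Fin n → E} (hZ : pairZ β Y ≠ 0) :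
    ∑ a ∈ univ.offDiag, qfun β Y a.1 a.2 = 1 := by
  simp only [qfun]
  rw [← sum_div, ← pairZ_eq_sum_offDiag, div_self hZ]

theorem qfun_le_one (hβ : ∀ x, 0 ≤ x → 0 < β x) (Y : Fin n → E) {i j : Fin n} (hij : i ≠ j) :
    qfun β Y i j ≤ 1 := by
  have : Nontrivial (Fin n) := ⟨i, j, hij⟩
  rw [← sum_offDiag_qfun (pairZ_pos hβ Y).ne']
  exact single_le_sum (f := fun a : Fin n × Fin n ↦ qfun β Y a.1 a.2)
    (fun a _ ↦ (qfun_pos hβ Y a.1 a.2).le) (show (i, j) ∈ univ.offDiag by simpa using hij)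

/-- The cross entropy `-∑_{i ≠ j} p_{ij} log q_{ij}(Y)`. It differs from the relative entropy
`∑_{i ≠ j} p_{ij} log (p_{ij} / q_{ij}(Y))` by a term independent of `Y`, so it has the same
gradient flow. -/
noncomputable def crossEntropy (β : ℝ → ℝ) (p : Fin n → Fin n → ℝ) (Y : Fin n → E) : ℝ :=
  -∑ a ∈ univ.offDiag, p a.1 a.2 * Real.log (qfun β Y a.1 a.2)

theorem exp_neg_crossEntropy_div_le_qfun {p : Fin n → Fin n → ℝ} (hβ : ∀ x, 0 ≤ x → 0 < β x)
    (hp : ∀ i j, i ≠ j → 0 ≤ p i j) (Y : Fin n → E) {i j : Fin n} (hij : i ≠ j)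
    (hpij : 0 < p i j) : Real.exp (-(crossEntropy β p Y / p i j)) ≤ qfun β Y i j := by
  have : Nontrivial (Fin n) := ⟨i, j, hij⟩
  have hterm : ∀ a ∈ univ.offDiag, 0 ≤ -(p a.1 a.2 * Real.log (qfun β Y a.1 a.2)) := by
    intro a ha
    have ha : a.1 ≠ a.2 := (mem_offDiag.1 ha).2.2
    exact neg_nonneg.2 <| mul_nonpos_of_nonneg_of_nonpos (hp _ _ ha) <|
      Real.log_nonpos (qfun_pos hβ Y _ _).le (qfun_le_one hβ Y ha)
  have hsingle : -(p i j * Real.log (qfun β Y i j)) ≤ crossEntropy β p Y := by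
    rw [crossEntropy, ← sum_neg_distrib]
    exact single_le_sum (f := fun a : Fin n × Fin n ↦ -(p a.1 a.2 * Real.log (qfun β Y a.1 a.2)))
      hterm (show (i, j) ∈ univ.offDiag by simpa using hij)
  rw [← Real.le_log_iff_exp_le (qfun_pos hβ Y i j), neg_le, le_div_iff₀ hpij]
  linarith

/-- The sum `∑_{i, j} |y_i - y_j|²`, a smooth stand-in for the squared diameter. -/
noncomputable def pairwiseSq (Y : Fin n → E) : ℝ :=
  ∑ i, ∑ j, ‖Y i - Y j‖ ^ 2

theorem pairwiseSq_nonneg (Y : Fin n → E) : 0 ≤ pairwiseSq Y :=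
  sum_nonneg fun _ _ ↦ sum_nonneg fun _ _ ↦ sq_nonneg _

theorem pairwiseSq_eq_sum_offDiag (Y : Fin n → E) :
    pairwiseSq Y = ∑ a ∈ univ.offDiag, ‖Y a.1 - Y a.2‖ ^ 2 :=
  (sum_univ_offDiag_eq_sum_sum (f := fun i j ↦ ‖Y i - Y j‖ ^ 2) fun i ↦ by simp).symm

theorem sq_norm_sub_le_pairwiseSq (Y : Fin n → E) (i j : Fin n) :
    ‖Y i - Y j‖ ^ 2 ≤ pairwiseSq Y :=
  calc ‖Y i - Y j‖ ^ 2 ≤ ∑ l, ‖Y i - Y l‖ ^ 2 :=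
        single_le_sum (f := fun l ↦ ‖Y i - Y l‖ ^ 2) (fun _ _ ↦ sq_nonneg _) (mem_univ j)
    _ ≤ pairwiseSq Y :=
        single_le_sum (f := fun k ↦ ∑ l, ‖Y k - Y l‖ ^ 2)
          (fun _ _ ↦ sum_nonneg fun _ _ ↦ sq_nonneg _) (mem_univ i)

theorem diamY_nonneg (Y : Fin n → E) : 0 ≤ diamY Y :=
  Metric.diam_nonneg

theorem diamY_sq_le_pairwiseSq (Y : Fin n → E) : diamY Y ^ 2 ≤ pairwiseSq Y := by
  rw [← Real.le_sqrt (diamY_nonneg Y) (pairwiseSq_nonneg Y)]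
  refine Metric.diam_le_of_forall_dist_le (Real.sqrt_nonneg _) ?_
  rintro _ ⟨i, rfl⟩ _ ⟨j, rfl⟩
  rw [dist_eq_norm]
  exact Real.le_sqrt_of_sq_le (sq_norm_sub_le_pairwiseSq Y i j)

end Similarity

section Derivatives

open Finset RealInnerProductSpace

variable {n : ℕ} {β : ℝ → ℝ} {D : Set ℝ} {t : ℝ}

theorem lbd_eq_derivWithin_div (hβ : ∀ x, 0 ≤ x → 0 < β x)
    (hdiff : DifferentiableOn ℝ β (Set.Ici 0)) {x : ℝ} (hx : 0 ≤ x) :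
    lbd β x = derivWithin β (Set.Ici 0) x / β x :=
  derivWithin.log (hdiff x hx) (hβ x hx).ne' (uniqueDiffOn_Ici 0 x hx)

theorem hasDerivWithinAt_comp_lbd (hβ : ∀ x, 0 ≤ x → 0 < β x)
    (hdiff : DifferentiableOn ℝ β (Set.Ici 0)) {r : ℝ → ℝ} {r' : ℝ} (hr : ∀ u, 0 ≤ r u)
    (hr' : HasDerivWithinAt r r' D t) :
    HasDerivWithinAt (fun u ↦ β (r u)) (β (r t) * (lbd β (r t) * r')) D t := by
  have h := (hdiff (r t) (hr t)).hasDerivWithinAt.comp t hr' fun u _ ↦ hr u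
  rwa [← mul_assoc, lbd_eq_derivWithin_div hβ hdiff (hr t), mul_div_cancel₀ _ (hβ _ (hr t)).ne']

section Normed

variable {E : Type*} [NormedAddCommGroup E] {Y : ℝ → Fin n → E} {r' : Fin n → Fin n → ℝ}

theorem hasDerivWithinAt_log_qfun (hβ : ∀ x, 0 ≤ x → 0 < β x)
    (hdiff : DifferentiableOn ℝ β (Set.Ici 0))
    (hr : ∀ i j, HasDerivWithinAt (fun u ↦ ‖Y u i - Y u j‖ ^ 2) (r' i j) D t)
    {i j : Fin n} (hij : i ≠ j) :
    HasDerivWithinAt (fun u ↦ Real.log (qfun β (Y u) i j))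
      (lbd β (‖Y t i - Y t j‖ ^ 2) * r' i j - ∑ a ∈ univ.offDiag,
        qfun β (Y t) a.1 a.2 * (lbd β (‖Y t a.1 - Y t a.2‖ ^ 2) * r' a.1 a.2)) D t := by
  have : Nontrivial (Fin n) := ⟨i, j, hij⟩
  have hZ (u : ℝ) : pairZ β (Y u) ≠ 0 := (pairZ_pos hβ (Y u)).ne'
  have hβ0 (u : ℝ) : β (‖Y u i - Y u j‖ ^ 2) ≠ 0 := (hβ _ (sq_nonneg _)).ne'
  have hnum (k l : Fin n) :=
    hasDerivWithinAt_comp_lbd hβ hdiff (fun u ↦ sq_nonneg ‖Y u k - Y u l‖) (hr k l)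
  have hden : HasDerivWithinAt (fun u ↦ pairZ β (Y u)) (∑ a ∈ univ.offDiag,
      β (‖Y t a.1 - Y t a.2‖ ^ 2) * (lbd β (‖Y t a.1 - Y t a.2‖ ^ 2) * r' a.1 a.2)) D t := by
    simp only [pairZ_eq_sum_offDiag]
    exact HasDerivWithinAt.fun_sum fun a _ ↦ hnum a.1 a.2
  simp only [qfun, Real.log_div (hβ0 _) (hZ _)]
  refine (((hnum i j).log (hβ0 t)).fun_sub (hden.log (hZ t))).congr_deriv ?_
  rw [mul_div_cancel_left₀ _ (hβ0 t), sum_div]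
  simp only [div_mul_eq_mul_div]

theorem hasDerivWithinAt_crossEntropy {p : Fin n → Fin n → ℝ} (hβ : ∀ x, 0 ≤ x → 0 < β x)
    (hdiff : DifferentiableOn ℝ β (Set.Ici 0)) (hpsum : ∑ a ∈ univ.offDiag, p a.1 a.2 = 1)
    (hr : ∀ i j, HasDerivWithinAt (fun u ↦ ‖Y u i - Y u j‖ ^ 2) (r' i j) D t) :
    HasDerivWithinAt (fun u ↦ crossEntropy β p (Y u))
      (-∑ a ∈ univ.offDiag, (p a.1 a.2 - qfun β (Y t) a.1 a.2) *
        (lbd β (‖Y t a.1 - Y t a.2‖ ^ 2) * r' a.1 a.2)) D t := by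
  have h := (HasDerivWithinAt.fun_sum fun a (ha : a ∈ univ.offDiag) ↦
    (hasDerivWithinAt_log_qfun hβ hdiff hr (mem_offDiag.1 ha).2.2).const_mul (p a.1 a.2)).fun_neg
  refine h.congr_deriv ?_
  simp only [mul_sub, sub_mul, sum_sub_distrib, ← sum_mul, hpsum, one_mul]

end Normed

variable {E : Type*} [NormedAddCommGroup E] [InnerProductSpace ℝ E]

theorem hasDerivWithinAt_pairwiseSq {Y : ℝ → Fin n → E} {v : Fin n → E}
    (hY : ∀ i, HasDerivWithinAt (fun u ↦ Y u i) (v i) D t) (hv : ∑ i, v i = 0) :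
    HasDerivWithinAt (fun u ↦ pairwiseSq (Y u)) (4 * n * ∑ i, ⟪Y t i, v i⟫) D t := by
  have h : HasDerivWithinAt (fun u ↦ pairwiseSq (Y u))
      (∑ i, ∑ j, 2 * ⟪Y t i - Y t j, v i - v j⟫) D t :=
    HasDerivWithinAt.fun_sum fun i _ ↦ HasDerivWithinAt.fun_sum fun j _ ↦
      ((hY i).sub (hY j)).norm_sq
  refine h.congr_deriv ?_
  simp only [← mul_sum, sum_sum_inner_sub_sub_of_sum_eq_zero (Y t) hv, Fintype.card_fin]
  ring

end Derivatives

section Flow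

open Finset RealInnerProductSpace

variable {n : ℕ} {β : ℝ → ℝ} {p : Fin n → Fin n → ℝ}

/-- The coefficient of `y_i - y_j` in the velocity of the point `y_i`. -/
noncomputable def flowCoeff {E : Type*} [NormedAddCommGroup E] (β : ℝ → ℝ)
    (p : Fin n → Fin n → ℝ) (Y : Fin n → E) (i j : Fin n) : ℝ :=
  4 * (p i j - qfun β Y i j) * lbd β (‖Y i - Y j‖ ^ 2)

theorem flowCoeff_comm {E : Type*} [NormedAddCommGroup E] (hsymm : ∀ i j, p i j = p j i)
    (Y : Fin n → E) (i j : Fin n) : flowCoeff β p Y i j = flowCoeff β p Y j i := by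
  rw [flowCoeff, flowCoeff, hsymm, qfun_comm, norm_sub_rev]

/-- The velocity of the point `y_i` under the gradient flow. The sum includes `j = i`, whose term
vanishes. -/
noncomputable def flowVelocity {E : Type*} [NormedAddCommGroup E] [NormedSpace ℝ E] (β : ℝ → ℝ)
    (p : Fin n → Fin n → ℝ) (Y : Fin n → E) (i : Fin n) : E :=
  ∑ j, flowCoeff β p Y i j • (Y i - Y j)

theorem sum_flowVelocity {E : Type*} [NormedAddCommGroup E] [NormedSpace ℝ E]
    (hsymm : ∀ i j, p i j = p j i) (Y : Fin n → E) : ∑ i, flowVelocity β p Y i = 0 :=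
  sum_sum_smul_sub_eq_zero (flowCoeff_comm hsymm Y) Y

theorem IsGradFlow.hasDerivWithinAt {E : Type*} [NormedAddCommGroup E] [NormedSpace ℝ E]
    {Y : ℝ → Fin n → E} (h : IsGradFlow β p Y) {t : ℝ} (ht : t ∈ Set.Ici 0) (i : Fin n) :
    HasDerivWithinAt (fun u ↦ Y u i) (flowVelocity β p (Y t) i) (Set.Ici 0) t := by
  refine (h i t ht).congr_deriv (sum_subset (filter_subset _ _) fun j _ hj ↦ ?_)
  obtain rfl : j = i := by simpa using hj
  rw [sub_self, smul_zero]

variable {E : Type*} [NormedAddCommGroup E] [InnerProductSpace ℝ E]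

theorem sum_offDiag_mul_inner_sub_sub_eq_sum_inner_flowVelocity (hsymm : ∀ i j, p i j = p j i)
    (Y v : Fin n → E) :
    2 * ∑ a ∈ univ.offDiag, (p a.1 a.2 - qfun β Y a.1 a.2) *
        (lbd β (‖Y a.1 - Y a.2‖ ^ 2) * ⟪Y a.1 - Y a.2, v a.1 - v a.2⟫)
      = ∑ i, ⟪flowVelocity β p Y i, v i⟫ := by
  have h := sum_sum_mul_inner_sub_sub (flowCoeff_comm (β := β) hsymm Y) Y v
  rw [← sum_univ_offDiag_eq_sum_sum (fun i ↦ by simp)] at h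
  have hcoeff : ∑ a ∈ univ.offDiag, flowCoeff β p Y a.1 a.2 * ⟪Y a.1 - Y a.2, v a.1 - v a.2⟫
      = 4 * ∑ a ∈ univ.offDiag, (p a.1 a.2 - qfun β Y a.1 a.2) *
        (lbd β (‖Y a.1 - Y a.2‖ ^ 2) * ⟪Y a.1 - Y a.2, v a.1 - v a.2⟫) := by
    simp only [flowCoeff, mul_sum, mul_assoc]
  simp only [flowVelocity]
  linarith

namespace IsGradFlow

variable {Y : ℝ → Fin n → E}

theorem hasDerivWithinAt_crossEntropy (hflow : IsGradFlow β p Y) (hβ : ∀ x, 0 ≤ x → 0 < β x)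
    (hdiff : DifferentiableOn ℝ β (Set.Ici 0)) (hsymm : ∀ i j, p i j = p j i)
    (hpsum : ∑ a ∈ univ.offDiag, p a.1 a.2 = 1) {t : ℝ} (ht : t ∈ Set.Ici 0) :
    HasDerivWithinAt (fun u ↦ crossEntropy β p (Y u))
      (-∑ i, ‖flowVelocity β p (Y t) i‖ ^ 2) (Set.Ici 0) t := by
  refine (_root_.hasDerivWithinAt_crossEntropy hβ hdiff hpsum fun i j ↦
    ((hflow.hasDerivWithinAt ht i).fun_sub (hflow.hasDerivWithinAt ht j)).norm_sq).congr_deriv ?_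
  simp only [← real_inner_self_eq_norm_sq (flowVelocity β p (Y t) _),
    ← sum_offDiag_mul_inner_sub_sub_eq_sum_inner_flowVelocity hsymm, mul_sum]
  congr! 2
  ring

theorem crossEntropy_le (hflow : IsGradFlow β p Y) (hβ : ∀ x, 0 ≤ x → 0 < β x)
    (hdiff : DifferentiableOn ℝ β (Set.Ici 0)) (hsymm : ∀ i j, p i j = p j i)
    (hpsum : ∑ a ∈ univ.offDiag, p a.1 a.2 = 1) {t : ℝ} (ht : 0 ≤ t) :
    crossEntropy β p (Y t) ≤ crossEntropy β p (Y 0) := by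
  simpa using le_add_mul_sub_of_hasDerivWithinAt_le (C := 0)
    (fun _ ↦ hflow.hasDerivWithinAt_crossEntropy hβ hdiff hsymm hpsum)
    (fun _ _ ↦ neg_nonpos.2 (sum_nonneg fun _ _ ↦ sq_nonneg _)) ht

theorem hasDerivWithinAt_pairwiseSq (hflow : IsGradFlow β p Y) (hsymm : ∀ i j, p i j = p j i)
    {t : ℝ} (ht : t ∈ Set.Ici 0) :
    HasDerivWithinAt (fun u ↦ pairwiseSq (Y u))
      (8 * n * ∑ a ∈ univ.offDiag, (p a.1 a.2 - qfun β (Y t) a.1 a.2) *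
        (lbd β (‖Y t a.1 - Y t a.2‖ ^ 2) * ‖Y t a.1 - Y t a.2‖ ^ 2)) (Set.Ici 0) t := by
  refine (_root_.hasDerivWithinAt_pairwiseSq (hflow.hasDerivWithinAt ht)
    (sum_flowVelocity hsymm (Y t))).congr_deriv ?_
  simp only [real_inner_comm (flowVelocity β p (Y t) _),
    ← sum_offDiag_mul_inner_sub_sub_eq_sum_inner_flowVelocity hsymm, real_inner_self_eq_norm_sq]
  ring

end IsGradFlow

end Flow

section TsneKernel

open Finset

/-- The kernel `β(x) = (1 + x)⁻¹` of t-SNE; up to normalization, `β(x²)` is the Cauchy density. -/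
noncomputable def tsneKernel (x : ℝ) : ℝ := (1 + x)⁻¹

theorem tsneKernel_pos {x : ℝ} (hx : 0 ≤ x) : 0 < tsneKernel x := by
  rw [tsneKernel]
  positivity

theorem hasDerivAt_tsneKernel {x : ℝ} (hx : 0 ≤ x) :
    HasDerivAt tsneKernel (-1 / (1 + x) ^ 2) x :=
  ((hasDerivAt_id x).const_add 1).fun_inv (by positivity)

theorem differentiableOn_tsneKernel : DifferentiableOn ℝ tsneKernel (Set.Ici 0) :=
  fun _ hx ↦ (hasDerivAt_tsneKernel hx).differentiableAt.differentiableWithinAt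

theorem lbd_tsneKernel {x : ℝ} (hx : 0 ≤ x) : lbd tsneKernel x = -tsneKernel x := by
  rw [lbd_eq_derivWithin_div (fun _ ↦ tsneKernel_pos) differentiableOn_tsneKernel hx,
    (hasDerivAt_tsneKernel hx).hasDerivWithinAt.derivWithin (uniqueDiffOn_Ici 0 x hx), tsneKernel]
  field_simp

theorem lbd_tsneKernel_mul_self {x : ℝ} (hx : 0 ≤ x) :
    lbd tsneKernel x * x = tsneKernel x - 1 := by
  rw [lbd_tsneKernel hx, tsneKernel]
  field_simp
  ring

variable {n : ℕ} {p : Fin n → Fin n → ℝ}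

theorem sum_offDiag_sub_qfun_mul_lbd_le_pairZ {E : Type*} [NormedAddCommGroup E]
    (hp : ∀ i j, i ≠ j → 0 ≤ p i j) (hpsum : ∑ a ∈ univ.offDiag, p a.1 a.2 = 1) (Y : Fin n → E) :
    ∑ a ∈ univ.offDiag, (p a.1 a.2 - qfun tsneKernel Y a.1 a.2) *
      (lbd tsneKernel (‖Y a.1 - Y a.2‖ ^ 2) * ‖Y a.1 - Y a.2‖ ^ 2) ≤ pairZ tsneKernel Y := by
  obtain ⟨b, hb, -⟩ := exists_ne_zero_of_sum_ne_zero (hpsum.trans_ne one_ne_zero)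
  have : Nontrivial (Fin n) := ⟨b.1, b.2, (mem_offDiag.1 hb).2.2⟩
  have hβ (x : ℝ) (hx : 0 ≤ x) : 0 < tsneKernel x := tsneKernel_pos hx
  have hp_le_one : ∀ a ∈ univ.offDiag, p a.1 a.2 ≤ 1 := fun a ha ↦
    hpsum ▸ single_le_sum (f := fun a : Fin n × Fin n ↦ p a.1 a.2)
      (fun b hb ↦ hp _ _ (mem_offDiag.1 hb).2.2) ha
  calc ∑ a ∈ univ.offDiag, (p a.1 a.2 - qfun tsneKernel Y a.1 a.2) *
          (lbd tsneKernel (‖Y a.1 - Y a.2‖ ^ 2) * ‖Y a.1 - Y a.2‖ ^ 2)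
      ≤ ∑ a ∈ univ.offDiag, (tsneKernel (‖Y a.1 - Y a.2‖ ^ 2) - p a.1 a.2
          + qfun tsneKernel Y a.1 a.2) := by
        refine sum_le_sum fun a ha ↦ ?_
        have hκ := hβ (‖Y a.1 - Y a.2‖ ^ 2) (sq_nonneg _)
        rw [lbd_tsneKernel_mul_self (sq_nonneg _)]
        have hpκ := mul_le_of_le_one_left hκ.le (hp_le_one a ha)
        have hqκ := mul_pos (qfun_pos hβ Y a.1 a.2) hκ
        linarith
    _ = pairZ tsneKernel Y := by
        rw [sum_add_distrib, sum_sub_distrib, hpsum, sum_offDiag_qfun (pairZ_pos hβ Y).ne',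
          ← pairZ_eq_sum_offDiag, sub_add_cancel]

theorem pairwiseSq_mul_pairZ_le_sum_exp {E : Type*} [NormedAddCommGroup E]
    (hp : ∀ i j, i ≠ j → 0 < p i j) (Y : Fin n → E) :
    pairwiseSq Y * pairZ tsneKernel Y
      ≤ ∑ a ∈ univ.offDiag, Real.exp (crossEntropy tsneKernel p Y / p a.1 a.2) := by
  rw [pairwiseSq_eq_sum_offDiag, sum_mul]
  refine sum_le_sum fun a ha ↦ ?_
  have ha : a.1 ≠ a.2 := (mem_offDiag.1 ha).2.2
  have : Nontrivial (Fin n) := ⟨a.1, a.2, ha⟩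
  have hβ (x : ℝ) (hx : 0 ≤ x) : 0 < tsneKernel x := tsneKernel_pos hx
  have hZ : 0 ≤ pairZ tsneKernel Y := (pairZ_pos hβ Y).le
  calc ‖Y a.1 - Y a.2‖ ^ 2 * pairZ tsneKernel Y
      ≤ (1 + ‖Y a.1 - Y a.2‖ ^ 2) * pairZ tsneKernel Y := by gcongr; linarith
    _ = (qfun tsneKernel Y a.1 a.2)⁻¹ := by rw [qfun, tsneKernel, inv_div, div_inv_eq_mul, mul_comm]
    _ ≤ (Real.exp (-(crossEntropy tsneKernel p Y / p a.1 a.2)))⁻¹ :=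
        inv_anti₀ (Real.exp_pos _) <|
          exp_neg_crossEntropy_div_le_qfun hβ (fun i j hij ↦ (hp i j hij).le) Y ha (hp _ _ ha)
    _ = Real.exp (crossEntropy tsneKernel p Y / p a.1 a.2) := by rw [← Real.exp_neg, neg_neg]

variable {E : Type*} [NormedAddCommGroup E] [InnerProductSpace ℝ E]

theorem IsGradFlow.pairwiseSq_mul_pairZ_le {Y : ℝ → Fin n → E} (hflow : IsGradFlow tsneKernel p Y)
    (hsymm : ∀ i j, p i j = p j i) (hp : ∀ i j, i ≠ j → 0 < p i j)
    (hpsum : ∑ a ∈ univ.offDiag, p a.1 a.2 = 1) {t : ℝ} (ht : 0 ≤ t) :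
    pairwiseSq (Y t) * pairZ tsneKernel (Y t)
      ≤ ∑ a ∈ univ.offDiag, Real.exp (crossEntropy tsneKernel p (Y 0) / p a.1 a.2) := by
  refine (pairwiseSq_mul_pairZ_le_sum_exp hp (Y t)).trans (sum_le_sum fun a ha ↦ ?_)
  have hpa := hp _ _ (mem_offDiag.1 ha).2.2
  gcongr
  exact hflow.crossEntropy_le (fun _ ↦ tsneKernel_pos) differentiableOn_tsneKernel hsymm hpsum ht

theorem IsGradFlow.pairwiseSq_sq_le {Y : ℝ → Fin n → E} (hflow : IsGradFlow tsneKernel p Y)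
    (hsymm : ∀ i j, p i j = p j i) (hp : ∀ i j, i ≠ j → 0 < p i j)
    (hpsum : ∑ a ∈ univ.offDiag, p a.1 a.2 = 1) {t : ℝ} (ht : 0 ≤ t) :
    pairwiseSq (Y t) ^ 2 ≤ pairwiseSq (Y 0) ^ 2 + 16 * n *
      (∑ a ∈ univ.offDiag, Real.exp (crossEntropy tsneKernel p (Y 0) / p a.1 a.2)) * t := by
  have hderiv (u : ℝ) (hu : u ∈ Set.Ici 0) :=
    (hflow.hasDerivWithinAt_pairwiseSq hsymm hu).fun_pow 2
  refine (le_add_mul_sub_of_hasDerivWithinAt_le hderiv (fun u hu ↦ ?_) ht).trans_eq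
    (by rw [sub_zero])
  have hS := pairwiseSq_nonneg (Y u)
  have hgrowth := sum_offDiag_sub_qfun_mul_lbd_le_pairZ (fun i j hij ↦ (hp i j hij).le) hpsum (Y u)
  have hbound := hflow.pairwiseSq_mul_pairZ_le hsymm hp hpsum hu
  calc _ ≤ (2 : ℕ) * pairwiseSq (Y u) ^ (2 - 1) * (8 * n * pairZ tsneKernel (Y u)) := by gcongr
    _ = 16 * n * (pairwiseSq (Y u) * pairZ tsneKernel (Y u)) := by push_cast; ring
    _ ≤ _ := by gcongr

end TsneKernel

theorem tsne_diameter_upper_bound_general {E : Type*} [NormedAddCommGroup E]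
    [InnerProductSpace ℝ E] {n : ℕ} (p : Fin n → Fin n → ℝ) (hsymm : ∀ i j, p i j = p j i)
    (hppos : ∀ i j, i ≠ j → 0 < p i j)
    (hpsum : (∑ i, ∑ j, if i ≠ j then p i j else (0 : ℝ)) = 1)
    (Y : ℝ → Fin n → E) (hflow : IsGradFlow tsneKernel p Y) :
    ∃ C : ℝ, 0 < C ∧ ∀ t : ℝ, 1 ≤ t → diamY (Y t) ≤ C * t ^ ((1 : ℝ) / 4) := by
  rw [← sum_univ_offDiag_eq_sum_sum_ite] at hpsum
  set S₀ := pairwiseSq (Y 0)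
  set L := 16 * n * ∑ a ∈ Finset.univ.offDiag,
    Real.exp (crossEntropy tsneKernel p (Y 0) / p a.1 a.2)
  have hM : 0 < S₀ ^ 2 + L + 1 := by positivity
  refine ⟨(S₀ ^ 2 + L + 1) ^ ((1 : ℝ) / 4), by positivity, fun t ht ↦ ?_⟩
  have ht₀ : 0 ≤ t := zero_le_one.trans ht
  rw [← Real.mul_rpow hM.le ht₀, one_div,
    Real.le_rpow_inv_iff_of_pos (diamY_nonneg _) (by positivity) (by norm_num)]
  norm_cast
  calc diamY (Y t) ^ 4 = (diamY (Y t) ^ 2) ^ 2 := by ring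
    _ ≤ pairwiseSq (Y t) ^ 2 := by gcongr; exact diamY_sq_le_pairwiseSq (Y t)
    _ ≤ S₀ ^ 2 + L * t := hflow.pairwiseSq_sq_le hsymm hppos hpsum ht₀
    _ ≤ S₀ ^ 2 * t + L * t + t := by linarith [le_mul_of_one_le_right (sq_nonneg S₀) ht]
    _ = (S₀ ^ 2 + L + 1) * t := by ring

/-- **Theorem 1.2 (i).** In the t-SNE case `β(x) = (1+x)⁻¹`, every solution of the gradient
flow of the relative entropy satisfies `diam Y(t) ≤ C t^{1/4}` for `t ≥ 1`. -/
theorem tsne_diameter_upper_bound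
    (s n : ℕ) (hs : 1 ≤ s) (hn : s + 1 < n)
    (p : Fin n → Fin n → ℝ)
    (hsymm : ∀ i j, p i j = p j i)
    (hppos : ∀ i j, i ≠ j → 0 < p i j)
    (hpsum : (∑ i, ∑ j, if i ≠ j then p i j else (0 : ℝ)) = 1)
    (β : ℝ → ℝ) (hβ : β = fun x => (1 + x)⁻¹)
    (Y : ℝ → Fin n → EuclideanSpace ℝ (Fin s))
    (hflow : IsGradFlow β p Y) :
    ∃ C : ℝ, 0 < C ∧ ∀ t : ℝ, 1 ≤ t → diamY (Y t) ≤ C * t ^ ((1 : ℝ) / 4) := by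
  subst hβ
  exact tsne_diameter_upper_bound_general p hsymm hppos hpsum Y hflow
end

section
/- Let β(x) = (1+x)^{-1} (the t-SNE case). There exist an integer n > s+1 for some s ≥ 1, a symmetric probability distribution (p_{ij}) with all p_{ij} > 0, an initial configuration Y_0 ⊂ ℝ^s, a solution Y(t) of the gradient flow of the relative entropy with Y(0) = Y_0, and a constant c > 0, such that diam Y(t) ≥ c t^{1/4} for all t ≥ 0. -/
open Filter Topology

/-!
Three equally spaced points `-a e, 0, a e` on a line stay equally spaced under the flow when
`p₀₁ = p₁₂ = x` and `p₀₂ = 1/2 - 2x`, so the flow reduces to a scalar equation for the spacing `a`.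
As `a → ∞`, the terms of order `a⁻¹` in the velocity cancel because `p` and `q` have the same total
mass; what is left is `a' ~ (3x - 2/3) a⁻³`, which for `x > 2/9` is repulsive and makes `a⁴` grow at
least linearly.
-/

namespace TSNE

section ScalarODE

lemma surjective_of_hasDerivAt_ge {F F' : ℝ → ℝ} {m : ℝ} (hF : ∀ x, HasDerivAt F (F' x) x)
    (hm : 0 < m) (hF' : ∀ x, m ≤ F' x) : Function.Surjective F := by
  have hdiff : Differentiable ℝ F := fun x => (hF x).differentiableAt
  have increment_ge : ∀ ⦃x y : ℝ⦄, x ≤ y → m * (y - x) ≤ F y - F x :=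
    mul_sub_le_image_sub_of_le_deriv hdiff fun x => (hF x).deriv ▸ hF' x
  have htop : Tendsto (fun x => m * x + F 0) atTop atTop :=
    tendsto_atTop_add_const_right _ _ (tendsto_id.const_mul_atTop hm)
  have hbot : Tendsto (fun x => m * x + F 0) atBot atBot :=
    tendsto_atBot_add_const_right _ _ (tendsto_id.const_mul_atBot hm)
  refine hdiff.continuous.surjective (tendsto_atTop_mono' _ ?_ htop)
    (tendsto_atBot_mono' _ ?_ hbot)
  · filter_upwards [eventually_ge_atTop 0] with x hx
    linarith [increment_ge hx]
  · filter_upwards [eventually_le_atBot 0] with x hx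
    linarith [increment_ge hx]

/-- Separation of variables: the solution is the inverse of the time `x ↦ ∫ 1/f` needed to reach
`x`; boundedness of `f` makes that time exhaust `ℝ`. -/
theorem exists_forall_hasDerivAt_of_pos_of_le {f : ℝ → ℝ} {M : ℝ} (hf : Continuous f)
    (hpos : ∀ x, 0 < f x) (hM : ∀ x, f x ≤ M) (x₀ : ℝ) :
    ∃ b : ℝ → ℝ, b 0 = x₀ ∧ ∀ t, HasDerivAt b (f (b t)) t := by
  let time : ℝ → ℝ := fun x => ∫ y in x₀..x, (f y)⁻¹
  have time_deriv : ∀ x, HasDerivAt time (f x)⁻¹ x :=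
    fun x => (hf.inv₀ fun y => (hpos y).ne').integral_hasStrictDerivAt x₀ x |>.hasDerivAt
  have time_strictMono : StrictMono time :=
    strictMono_of_hasDerivAt_pos time_deriv fun x => inv_pos.2 (hpos x)
  have time_surj : Function.Surjective time :=
    surjective_of_hasDerivAt_ge time_deriv (inv_pos.2 ((hpos 0).trans_le (hM 0)))
      fun x => inv_anti₀ (hpos x) (hM x)
  let e : ℝ ≃o ℝ := time_strictMono.orderIsoOfSurjective time time_surj
  have time_symm : ∀ t, time (e.symm t) = t := e.apply_symm_apply
  refine ⟨e.symm, time_strictMono.injective ?_, fun t => ?_⟩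
  · simp [time_symm, time]
  · simpa using HasDerivAt.of_local_left_inverse e.symm.continuous.continuousAt
      (time_deriv (e.symm t)) (inv_ne_zero (hpos _).ne') (Eventually.of_forall time_symm)

end ScalarODE

/-- The kernel `β(x) = (1 + x)⁻¹` of t-SNE, as a function of the squared distance. -/
noncomputable def cauchyKernel (x : ℝ) : ℝ := (1 + x)⁻¹

lemma lbd_cauchyKernel {x : ℝ} (hx : 0 ≤ x) : lbd cauchyKernel x = -(1 + x)⁻¹ := by
  have hderiv : HasDerivAt (fun y => Real.log (cauchyKernel y)) (-(1 + x)⁻¹) x := by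
    simpa [cauchyKernel, Real.log_inv] using
      (((hasDerivAt_id x).const_add 1).log (by simp only [id]; positivity)).fun_neg
  exact hderiv.hasDerivWithinAt.derivWithin (uniqueDiffOn_Ici 0 x hx)

lemma sum_offDiag_fin_three {M : Type*} [AddCommMonoid M] (g : Fin 3 → Fin 3 → M) :
    (∑ i, ∑ j, if i ≠ j then g i j else 0) = g 0 1 + g 0 2 + g 1 0 + g 1 2 + g 2 0 + g 2 1 := by
  simp [Fin.sum_univ_three, add_assoc]

section EquispacedTriple

variable {E : Type*} [NormedAddCommGroup E] [NormedSpace ℝ E] {e : E} (a : ℝ)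

/-- The configuration `-a e, 0, a e` of three equally spaced collinear points, with spacing `a` in
the direction `e`. The index `i : Fin 3` gives the position `i - 1` in units of `a`. -/
noncomputable def equispacedTriple (e : E) (a : ℝ) (i : Fin 3) : E := (((i : ℝ) - 1) * a) • e

lemma equispacedTriple_sub (i j : Fin 3) :
    equispacedTriple e a i - equispacedTriple e a j = (((i : ℝ) - j) * a) • e := by
  rw [equispacedTriple, equispacedTriple, ← sub_smul]
  ring_nf

lemma norm_equispacedTriple_sub (he : ‖e‖ = 1) (i j : Fin 3) :
    ‖equispacedTriple e a i - equispacedTriple e a j‖ = |((i : ℝ) - j) * a| := by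
  rw [equispacedTriple_sub, norm_smul, he, mul_one, Real.norm_eq_abs]

lemma two_mul_abs_le_diamY_equispacedTriple (he : ‖e‖ = 1) :
    2 * |a| ≤ diamY (equispacedTriple e a) := by
  calc 2 * |a| = dist (equispacedTriple e a 2) (equispacedTriple e a 0) := by
        simp [dist_eq_norm, norm_equispacedTriple_sub a he, abs_mul]
    _ ≤ diamY (equispacedTriple e a) :=
        Metric.dist_le_diam_of_mem (Set.finite_range _).isBounded ⟨2, rfl⟩ ⟨0, rfl⟩

lemma pairZ_equispacedTriple (he : ‖e‖ = 1) :
    pairZ cauchyKernel (equispacedTriple e a) =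
      6 * (1 + 3 * a ^ 2) / ((1 + a ^ 2) * (1 + 4 * a ^ 2)) := by
  have hsum : pairZ cauchyKernel (equispacedTriple e a) =
      4 * (1 + a ^ 2)⁻¹ + 2 * (1 + 4 * a ^ 2)⁻¹ := by
    rw [pairZ, sum_offDiag_fin_three]
    simp only [norm_equispacedTriple_sub a he, sq_abs, cauchyKernel]
    norm_num
    ring
  rw [hsum]
  field_simp
  ring

end EquispacedTriple

section ChainWeights

/-- The symmetric weights on `Fin 3` with value `x` on the neighbouring pairs `{0, 1}` and `{1, 2}`
and `1/2 - 2x` on `{0, 2}`, so that the off-diagonal entries sum to `1`. -/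
noncomputable def chainWeights (x : ℝ) : Fin 3 → Fin 3 → ℝ :=
  ![![0, x, 1 / 2 - 2 * x], ![x, 0, x], ![1 / 2 - 2 * x, x, 0]]

lemma chainWeights_comm (x : ℝ) (i j : Fin 3) : chainWeights x i j = chainWeights x j i := by
  fin_cases i <;> fin_cases j <;> rfl

lemma chainWeights_pos {x : ℝ} (hx₀ : 0 < x) (hx₁ : x < 1 / 4) {i j : Fin 3} (hij : i ≠ j) :
    0 < chainWeights x i j := by
  fin_cases i <;> fin_cases j <;> simp [chainWeights] at hij ⊢ <;> linarith

lemma sum_chainWeights (x : ℝ) :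
    (∑ i, ∑ j, if i ≠ j then chainWeights x i j else (0 : ℝ)) = 1 := by
  rw [sum_offDiag_fin_three]
  simp only [chainWeights, Matrix.cons_val]
  ring

end ChainWeights

section Spacing

/-- The logarithmic derivative `a'/a` of the spacing `a` of an equally spaced triple moving by the
gradient flow for the weights `chainWeights x`. -/
noncomputable def spacingRate (x a : ℝ) : ℝ :=
  2 * ((6 * x - 1) + (18 * x - 4) * a ^ 2) /
    ((1 + 3 * a ^ 2) * (1 + a ^ 2) * (1 + 4 * a ^ 2))

variable {x : ℝ}

lemma continuous_spacingRate (x : ℝ) : Continuous (spacingRate x) := by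
  unfold spacingRate
  fun_prop (disch := intro; positivity)

lemma spacingRate_pos (hx : 2 / 9 < x) (a : ℝ) : 0 < spacingRate x a := by
  have h₀ : 0 < 6 * x - 1 := by linarith
  have h₁ : 0 < 18 * x - 4 := by linarith
  unfold spacingRate
  positivity

lemma spacingRate_le (hx : 0 ≤ x) (a : ℝ) : spacingRate x a ≤ 36 * x := by
  unfold spacingRate
  rw [div_le_iff₀ (by positivity)]
  calc 2 * ((6 * x - 1) + (18 * x - 4) * a ^ 2) ≤ 36 * x * (1 + a ^ 2) := by
        nlinarith [sq_nonneg a, mul_nonneg hx (sq_nonneg a)]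
    _ ≤ 36 * x * ((1 + 3 * a ^ 2) * (1 + a ^ 2) * (1 + 4 * a ^ 2)) := by
        gcongr
        nlinarith [sq_nonneg a, sq_nonneg (a ^ 2), pow_nonneg (sq_nonneg a) 3]

lemma le_four_mul_pow_four_mul_spacingRate (hx : 2 / 9 ≤ x) {a : ℝ} (ha : 1 ≤ a) :
    (18 * x - 4) / 5 ≤ 4 * a ^ 4 * spacingRate x a := by
  have hu : 1 ≤ a ^ 2 := one_le_pow₀ ha
  have hden : (1 + 3 * a ^ 2) * (1 + a ^ 2) * (1 + 4 * a ^ 2) ≤ 40 * (a ^ 2) ^ 3 := by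
    calc (1 + 3 * a ^ 2) * (1 + a ^ 2) * (1 + 4 * a ^ 2)
        ≤ (4 * a ^ 2) * (2 * a ^ 2) * (5 * a ^ 2) := by gcongr <;> linarith
      _ = 40 * (a ^ 2) ^ 3 := by ring
  have hκ : 0 ≤ (18 * x - 4) / 5 := by linarith
  unfold spacingRate
  rw [← mul_div_assoc, le_div_iff₀ (by positivity)]
  calc (18 * x - 4) / 5 * ((1 + 3 * a ^ 2) * (1 + a ^ 2) * (1 + 4 * a ^ 2))
      ≤ (18 * x - 4) / 5 * (40 * (a ^ 2) ^ 3) := by gcongr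
    _ = 4 * a ^ 4 * (2 * ((18 * x - 4) * a ^ 2)) := by ring
    _ ≤ 4 * a ^ 4 * (2 * ((6 * x - 1) + (18 * x - 4) * a ^ 2)) := by gcongr; linarith

theorem exists_hasDerivAt_mul_spacingRate (hx : 2 / 9 < x) :
    ∃ a : ℝ → ℝ, a 0 = 1 ∧ (∀ t, 0 < a t) ∧
      ∀ t, HasDerivAt a (a t * spacingRate x (a t)) t := by
  -- The equation for `log a` has a bounded right-hand side, hence a global solution.
  obtain ⟨b, hb₀, hb⟩ := exists_forall_hasDerivAt_of_pos_of_le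
    ((continuous_spacingRate x).comp Real.continuous_exp) (fun b => spacingRate_pos hx (Real.exp b))
    (fun b => spacingRate_le (by linarith) (Real.exp b)) 0
  exact ⟨fun t => Real.exp (b t), by simp [hb₀], fun t => Real.exp_pos _, fun t => (hb t).exp⟩

theorem mul_le_pow_four_of_hasDerivAt_mul_spacingRate (hx : 2 / 9 < x) {a : ℝ → ℝ}
    (ha₀ : a 0 = 1) (hpos : ∀ t, 0 < a t)
    (ha : ∀ t, HasDerivAt a (a t * spacingRate x (a t)) t) {t : ℝ} (ht : 0 ≤ t) :
    (18 * x - 4) / 5 * t ≤ a t ^ 4 := by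
  have hmono : StrictMono a :=
    strictMono_of_hasDerivAt_pos ha fun t => mul_pos (hpos t) (spacingRate_pos hx _)
  have hpow : ∀ u, HasDerivAt (fun u => a u ^ 4) (4 * a u ^ 4 * spacingRate x (a u)) u :=
    fun u => ((ha u).pow 4).congr_deriv (by push_cast; ring)
  have hincrement : (18 * x - 4) / 5 * (t - 0) ≤ a t ^ 4 - a 0 ^ 4 := by
    refine (convex_Ici 0).mul_sub_le_image_sub_of_le_deriv
      (fun u _ => (hpow u).continuousAt.continuousWithinAt)
      (fun u _ => (hpow u).differentiableAt.differentiableWithinAt)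
      (fun u hu => ?_) 0 Set.self_mem_Ici t ht ht
    rw [(hpow u).deriv]
    exact le_four_mul_pow_four_mul_spacingRate hx.le
      (ha₀ ▸ hmono.monotone (interior_subset hu))
  rw [ha₀] at hincrement
  linarith

end Spacing

section Flow

variable {E : Type*} [NormedAddCommGroup E] [NormedSpace ℝ E] {e : E} {x : ℝ}

/-- The two terms are the forces exerted on the outer point `a e` by `0` and by `-a e`; the divisor
is the normalizing constant `pairZ`. -/
lemma outer_velocity_eq (x a : ℝ) :
    4 * (x - (1 + a ^ 2)⁻¹ / (6 * (1 + 3 * a ^ 2) / ((1 + a ^ 2) * (1 + 4 * a ^ 2)))) *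
          -(1 + a ^ 2)⁻¹ * a +
        4 * (1 / 2 - 2 * x -
            (1 + 4 * a ^ 2)⁻¹ / (6 * (1 + 3 * a ^ 2) / ((1 + a ^ 2) * (1 + 4 * a ^ 2)))) *
          -(1 + 4 * a ^ 2)⁻¹ * (2 * a) =
      a * spacingRate x a := by
  unfold spacingRate
  field_simp
  ring

lemma sum_smul_equispacedTriple_sub (he : ‖e‖ = 1) (x a : ℝ) (i : Fin 3) :
    ∑ j ∈ Finset.univ.filter (· ≠ i),
      (4 * (chainWeights x i j - qfun cauchyKernel (equispacedTriple e a) i j) *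
          lbd cauchyKernel (‖equispacedTriple e a i - equispacedTriple e a j‖ ^ 2)) •
        (equispacedTriple e a i - equispacedTriple e a j) =
      (((i : ℝ) - 1) * (a * spacingRate x a)) • e := by
  simp_rw [lbd_cauchyKernel (sq_nonneg _), qfun, pairZ_equispacedTriple a he,
    norm_equispacedTriple_sub a he, sq_abs, equispacedTriple_sub, smul_smul, ← Finset.sum_smul]
  congr 1
  have houter := outer_velocity_eq x a
  simp only [Finset.sum_filter, Fin.sum_univ_three, chainWeights, cauchyKernel]
  fin_cases i <;> simp only [Fin.reduceFinMk, Fin.reduceNe, Matrix.cons_val]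
  · norm_num
    linear_combination -houter
  · norm_num
  · norm_num
    linear_combination houter

theorem isGradFlow_equispacedTriple (he : ‖e‖ = 1) {a : ℝ → ℝ}
    (ha : ∀ t ∈ Set.Ici (0 : ℝ),
      HasDerivWithinAt a (a t * spacingRate x (a t)) (Set.Ici 0) t) :
    IsGradFlow cauchyKernel (chainWeights x) fun t => equispacedTriple e (a t) := by
  intro i t ht
  rw [sum_smul_equispacedTriple_sub he]
  exact ((ha t ht).const_mul ((i : ℝ) - 1)).smul_const e

theorem exists_isGradFlow_chainWeights_le_diamY (he : ‖e‖ = 1) (hx : 2 / 9 < x) :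
    ∃ Y : ℝ → Fin 3 → E, IsGradFlow cauchyKernel (chainWeights x) Y ∧
      ∀ t, 0 ≤ t → 2 * ((18 * x - 4) / 5) ^ (1 / 4 : ℝ) * t ^ (1 / 4 : ℝ) ≤ diamY (Y t) := by
  obtain ⟨a, ha₀, hpos, ha⟩ := exists_hasDerivAt_mul_spacingRate hx
  refine ⟨fun t => equispacedTriple e (a t),
    isGradFlow_equispacedTriple he fun t _ => (ha t).hasDerivWithinAt, fun t ht => ?_⟩
  have hκ : 0 ≤ (18 * x - 4) / 5 := by linarith
  calc 2 * ((18 * x - 4) / 5) ^ (1 / 4 : ℝ) * t ^ (1 / 4 : ℝ)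
      = 2 * ((18 * x - 4) / 5 * t) ^ (1 / 4 : ℝ) := by rw [Real.mul_rpow hκ ht, mul_assoc]
    _ ≤ 2 * (a t ^ 4) ^ (1 / 4 : ℝ) := by
        gcongr
        exact mul_le_pow_four_of_hasDerivAt_mul_spacingRate hx ha₀ hpos ha ht
    _ = 2 * |a t| := by
        rw [abs_of_pos (hpos t), one_div]
        exact_mod_cast congrArg (2 * ·) (Real.pow_rpow_inv_natCast (hpos t).le four_ne_zero)
    _ ≤ diamY (equispacedTriple e (a t)) := two_mul_abs_le_diamY_equispacedTriple _ he

end Flow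

end TSNE

/-- **Theorem 1.3 (i).** In the t-SNE case `β(x) = (1+x)⁻¹`, there are a dimension `s ≥ 1`,
a number of points `n > s+1`, a symmetric positive probability distribution `(p_{ij})`,
a solution `Y(t)` of the gradient flow of the relative entropy, and a constant `c > 0`
such that `diam Y(t) ≥ c t^{1/4}` for all `t ≥ 0`. -/
theorem tsne_diameter_lower_bound_example
    (β : ℝ → ℝ) (hβ : β = fun x => (1 + x)⁻¹) :
    ∃ (s n : ℕ) (p : Fin n → Fin n → ℝ)
      (Y : ℝ → Fin n → EuclideanSpace ℝ (Fin s)) (c : ℝ),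
      1 ≤ s ∧ s + 1 < n ∧
      (∀ i j, p i j = p j i) ∧ (∀ i j, i ≠ j → 0 < p i j) ∧
      (∑ i, ∑ j, if i ≠ j then p i j else (0 : ℝ)) = 1 ∧
      IsGradFlow β p Y ∧ 0 < c ∧
      ∀ t : ℝ, 0 ≤ t → c * t ^ ((1 : ℝ) / 4) ≤ diamY (Y t) := by
  subst hβ
  have he : ‖EuclideanSpace.single (0 : Fin 1) (1 : ℝ)‖ = 1 := by simp
  -- Any `x` in `(2/9, 1/4)` gives positive weights and a repulsive flow.
  obtain ⟨Y, hflow, hdiam⟩ :=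
    TSNE.exists_isGradFlow_chainWeights_le_diamY he (x := 7 / 30) (by norm_num)
  exact ⟨1, 3, TSNE.chainWeights (7 / 30), Y, _, le_rfl, by norm_num, TSNE.chainWeights_comm _,
    fun _ _ => TSNE.chainWeights_pos (by norm_num) (by norm_num), TSNE.sum_chainWeights _, hflow,
    by norm_num; positivity, hdiam⟩
end
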